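/- Let C be a nonempty finite set and let P₁, …, P_B (B ≥ 1) be probability mass functions on C that are strictly positive (P_i(c) > 0 for all i and all c ∈ C). Define the average distribution M by M(c) = (1/B) ∑_{i=1}^{B} P_i(c), the K-uncertainty δ_K = ∑_{1 ≤ i < j ≤ B} [D_KL(P_i ‖ P_j) + D_KL(P_j ‖ P_i)], and the uncertainty δ_v = (1/B) ∑_{i=1}^{B} D_KL(P_i ‖ M). Then δ_K ≥ B · δ_v. -/

import Mathlib

/-!
Since `-log` is convex, so is `D_KL(p ‖ ·)`, and Jensen's inequality bounds `D_KL(P i ‖ M)` by the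
mean over `j` of `D_KL(P i ‖ P j)`. Summing over `i`, where the diagonal terms vanish, gives the
sharper bound `B² · δ_v ≤ δ_K`. A factor `B` can then be given up because `δ_K ≥ 0`: the
symmetrized divergence of `p` and `q` is `∑ c, (p c - q c) * (log (p c) - log (q c))`, whose
summands are nonnegative whatever the total masses of `p` and `q`.
-/

open Finset Real

section KullbackLeibler

variable {C : Type*} [Fintype C]

/-- The Kullback–Leibler divergence `D_KL(p ‖ q)` of weights on a finite set. The total masses are
not required to be `1`; the value is meaningful only where `q` is positive. -/
noncomputable def finiteKLDiv (p q : C → ℝ) : ℝ :=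
  ∑ c, p c * log (p c / q c)

lemma finiteKLDiv_self (p : C → ℝ) : finiteKLDiv p p = 0 :=
  sum_eq_zero fun c _ ↦ by by_cases hc : p c = 0 <;> simp [hc]

lemma finiteKLDiv_eq_sum_sub (p : C → ℝ) {q : C → ℝ} (hq : ∀ c, q c ≠ 0) :
    finiteKLDiv p q = ∑ c, (p c * log (p c) - p c * log (q c)) := by
  refine sum_congr rfl fun c _ ↦ ?_
  rcases eq_or_ne (p c) 0 with hc | hc
  · simp [hc]
  · rw [log_div hc (hq c), mul_sub]

lemma finiteKLDiv_add_swap {p q : C → ℝ} (hp : ∀ c, p c ≠ 0) (hq : ∀ c, q c ≠ 0) :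
    finiteKLDiv p q + finiteKLDiv q p = ∑ c, (p c - q c) * (log (p c) - log (q c)) := by
  rw [finiteKLDiv_eq_sum_sub p hq, finiteKLDiv_eq_sum_sub q hp, ← sum_add_distrib]
  exact sum_congr rfl fun c _ ↦ by ring

lemma finiteKLDiv_add_swap_nonneg {p q : C → ℝ} (hp : ∀ c, 0 < p c) (hq : ∀ c, 0 < q c) :
    0 ≤ finiteKLDiv p q + finiteKLDiv q p := by
  rw [finiteKLDiv_add_swap (fun c ↦ (hp c).ne') fun c ↦ (hq c).ne']
  refine sum_nonneg fun c _ ↦ ?_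
  rcases le_total (p c) (q c) with h | h
  · exact mul_nonneg_of_nonpos_of_nonpos (sub_nonpos.2 h) (sub_nonpos.2 (log_le_log (hp c) h))
  · exact mul_nonneg (sub_nonneg.2 h) (sub_nonneg.2 (log_le_log (hq c) h))

lemma convexOn_finiteKLDiv_right {p : C → ℝ} (hp : ∀ c, 0 ≤ p c) :
    ConvexOn ℝ {q : C → ℝ | ∀ c, 0 < q c} (finiteKLDiv p) := by
  have convex_pos : Convex ℝ {q : C → ℝ | ∀ c, 0 < q c} := by
    simpa [Set.pi] using convex_pi (s := Set.univ) fun (_ : C) _ ↦ convex_Ioi (0 : ℝ)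
  refine ⟨convex_pos, fun q hq r hr a b ha hb hab ↦ ?_⟩
  have hqr := convex_pos hq hr ha hb hab
  rw [finiteKLDiv_eq_sum_sub p fun c ↦ (hq c).ne', finiteKLDiv_eq_sum_sub p fun c ↦ (hr c).ne',
    finiteKLDiv_eq_sum_sub p fun c ↦ (hqr c).ne', smul_sum, smul_sum, ← sum_add_distrib]
  refine sum_le_sum fun c _ ↦ ?_
  have log_concave : a * log (q c) + b * log (r c) ≤ log (a * q c + b * r c) :=
    strictConcaveOn_log_Ioi.concaveOn.2 (hq c) (hr c) ha hb hab
  calc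
    p c * log (p c) - p c * log (a * q c + b * r c)
      ≤ p c * log (p c) - p c * (a * log (q c) + b * log (r c)) := by
        gcongr
        exact hp c
    _ = (a + b) * (p c * log (p c)) - p c * (a * log (q c) + b * log (r c)) := by
        rw [hab, one_mul]
    _ = a * (p c * log (p c) - p c * log (q c)) + b * (p c * log (p c) - p c * log (r c)) := by
        ring

end KullbackLeibler

lemma sum_sum_Ioi_add_swap {ι M : Type*} [Fintype ι] [LinearOrder ι] [LocallyFiniteOrderTop ι]
    [AddCommMonoid M] {f : ι → ι → M} (hf : ∀ i, f i i = 0) :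
    ∑ i, ∑ j ∈ Ioi i, (f i j + f j i) = ∑ i, ∑ j, f i j := by
  let : LocallyFiniteOrderBot ι := .ofIic ι (fun i ↦ {j | j ≤ i}) (by simp)
  rw [sum_sum_Ioi_add_eq_sum_sum_off_diag fun j i ↦ f i j]
  refine sum_congr rfl fun i _ ↦ ?_
  rw [← sum_compl_add_sum {i}, sum_singleton, hf, add_zero]

section Uncertainty

variable {ι C : Type*} [Fintype ι]

/-- The average `M` of a finite family of weights. -/
noncomputable def averageWeight (P : ι → C → ℝ) (c : C) : ℝ :=
  1 / (Fintype.card ι : ℝ) * ∑ k, P k c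

variable [Fintype C]

/-- The uncertainty `δ_v`: the mean divergence of the members of a family from their average. -/
noncomputable def uncertainty (P : ι → C → ℝ) : ℝ :=
  1 / (Fintype.card ι : ℝ) * ∑ i, finiteKLDiv (P i) (averageWeight P)

/-- The K-uncertainty `δ_K`: the sum of the symmetrized divergences over all unordered pairs of
distinct indices, each listed once by means of a linear order on the index set. -/
noncomputable def kUncertainty [LinearOrder ι] [LocallyFiniteOrderTop ι] (P : ι → C → ℝ) : ℝ :=
  ∑ i, ∑ j ∈ Ioi i, (finiteKLDiv (P i) (P j) + finiteKLDiv (P j) (P i))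

lemma card_mul_finiteKLDiv_averageWeight_le [Nonempty ι] {p : C → ℝ} {P : ι → C → ℝ}
    (hp : ∀ c, 0 ≤ p c) (hP : ∀ i c, 0 < P i c) :
    Fintype.card ι * finiteKLDiv p (averageWeight P) ≤ ∑ j, finiteKLDiv p (P j) := by
  have card_pos : (0 : ℝ) < Fintype.card ι := by exact_mod_cast Fintype.card_pos
  have average_eq : averageWeight P = ∑ j, (1 / (Fintype.card ι : ℝ)) • P j := by
    ext c
    simp [averageWeight, mul_sum]
  have jensen := (convexOn_finiteKLDiv_right hp).map_sum_le (t := univ) (p := P)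
    (w := fun _ ↦ 1 / (Fintype.card ι : ℝ)) (fun _ _ ↦ by positivity)
    (by simp [card_pos.ne']) fun j _ ↦ hP j
  rw [← average_eq, ← smul_sum, smul_eq_mul, one_div_mul_eq_div] at jensen
  exact (le_div_iff₀' card_pos).1 jensen

lemma card_mul_uncertainty [Nonempty ι] (P : ι → C → ℝ) :
    Fintype.card ι * uncertainty P = ∑ i, finiteKLDiv (P i) (averageWeight P) := by
  rw [uncertainty, ← mul_assoc, mul_one_div_cancel (by simp), one_mul]

variable [LinearOrder ι] [LocallyFiniteOrderTop ι]

lemma kUncertainty_nonneg {P : ι → C → ℝ} (hP : ∀ i c, 0 < P i c) : 0 ≤ kUncertainty P :=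
  sum_nonneg fun i _ ↦ sum_nonneg fun j _ ↦ finiteKLDiv_add_swap_nonneg (hP i) (hP j)

variable [Nonempty ι]

theorem card_sq_mul_uncertainty_le_kUncertainty {P : ι → C → ℝ} (hP : ∀ i c, 0 < P i c) :
    (Fintype.card ι : ℝ) ^ 2 * uncertainty P ≤ kUncertainty P :=
  calc
    (Fintype.card ι : ℝ) ^ 2 * uncertainty P
      = ∑ i, Fintype.card ι * finiteKLDiv (P i) (averageWeight P) := by
        rw [sq, mul_assoc, card_mul_uncertainty, mul_sum]
    _ ≤ ∑ i, ∑ j, finiteKLDiv (P i) (P j) :=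
        sum_le_sum fun i _ ↦ card_mul_finiteKLDiv_averageWeight_le (fun c ↦ (hP i c).le) hP
    _ = kUncertainty P := (sum_sum_Ioi_add_swap fun i ↦ finiteKLDiv_self (P i)).symm

theorem stmt_0_general {P : ι → C → ℝ} (hP : ∀ i c, 0 < P i c) :
    Fintype.card ι * uncertainty P ≤ kUncertainty P := by
  have one_le_card : (1 : ℝ) ≤ Fintype.card ι := by exact_mod_cast Fintype.card_pos
  rcases le_total (uncertainty P) 0 with h | h
  · exact (mul_nonpos_of_nonneg_of_nonpos (by positivity) h).trans (kUncertainty_nonneg hP)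
  · calc
      Fintype.card ι * uncertainty P ≤ (Fintype.card ι : ℝ) ^ 2 * uncertainty P := by
        gcongr
        exact le_self_pow₀ one_le_card two_ne_zero
      _ ≤ kUncertainty P := card_sq_mul_uncertainty_le_kUncertainty hP

end Uncertainty

/-- For strictly positive pmfs `P 1, …, P B` on a nonempty finite set `C`,
with `M` the average distribution, `δ_K = ∑_{i<j} [D_KL(P i ‖ P j) + D_KL(P j ‖ P i)]`
and `δ_v = (1/B) ∑ i, D_KL(P i ‖ M)`, we have `δ_K ≥ B · δ_v`. -/
theorem stmt_0 {C : Type*} [Fintype C] [Nonempty C] (B : ℕ) (hB : 1 ≤ B)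
    (P : Fin B → C → ℝ)
    (hpos : ∀ i c, 0 < P i c)
    (hsum : ∀ i, ∑ c, P i c = 1) :
    (∑ i : Fin B, ∑ j ∈ Finset.Ioi i,
        ((∑ c, P i c * Real.log (P i c / P j c)) +
         (∑ c, P j c * Real.log (P j c / P i c))))
      ≥ (B : ℝ) *
        ((1 / (B : ℝ)) * ∑ i : Fin B,
          ∑ c, P i c * Real.log (P i c / ((1 / (B : ℝ)) * ∑ k : Fin B, P k c))) := by
  have : Nonempty (Fin B) := ⟨⟨0, hB⟩⟩
  simpa [uncertainty, kUncertainty, averageWeight, finiteKLDiv] using stmt_0_general hpos
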